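/- For a smooth symmetric traceless matrix field σ on R^3 and a fixed unit normal n with tangential projection Π = I - nnᵀ, define tr₁(σ) := sym(Π σ × n) (row-wise cross with n after left projection) and tr₃(σ) := 2 def_F(n·(sym curl σ)Π) - Π ∂_n(sym curl σ) Π. Then tr(tr₃(σ)) = div_F div_F tr₁(σ), where def_F u := sym(∇_F uᵀ) restricted tangentially, ∇_F = Π∇, and div_F div_F U := ∇_F · U · ∇_F. -/

import Mathlib

open Matrix MeasureTheory

noncomputable section

abbrev V3 : Type := Fin 3 → ℝ
abbrev M3 : Type := Matrix (Fin 3) (Fin 3) ℝ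

/-- `mskw a` is the skew-symmetric matrix with `mskw a *ᵥ b = a ×₃ b`. -/
def mskw (a : V3) : M3 :=
  !![0, -a 2, a 1; a 2, 0, -a 0; -a 1, a 0, 0]

/-- Partial derivative `∂_j f` at `x`. -/
def pd (j : Fin 3) (f : V3 → ℝ) (x : V3) : ℝ :=
  fderiv ℝ f x (Pi.single j 1)

/-- Curl of a vector field. -/
def curlVec (v : V3 → V3) (x : V3) : V3 :=
  ![pd 1 (fun y => v y 2) x - pd 2 (fun y => v y 1) x,
    pd 2 (fun y => v y 0) x - pd 0 (fun y => v y 2) x,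
    pd 0 (fun y => v y 1) x - pd 1 (fun y => v y 0) x]

/-- Row-wise curl of a matrix field. -/
def curlMat (U : V3 → M3) (x : V3) : M3 :=
  Matrix.of fun i j => curlVec (fun y => U y i) x j

/-- `S U = Uᵀ - tr U • I`. -/
def Smap (U : M3) : M3 := Uᵀ - U.trace • (1 : M3)

/-- `S⁻¹ U = Uᵀ - (1/2) tr U • I`. -/
def Sinv (U : M3) : M3 := Uᵀ - ((2:ℝ)⁻¹ * U.trace) • (1 : M3)

/-- Symmetric part. -/
def symPart (U : M3) : M3 := (2:ℝ)⁻¹ • (U + Uᵀ)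

/-- Deviatoric (trace-free) part. -/
def devPart (U : M3) : M3 := U - ((3:ℝ)⁻¹ * U.trace) • (1 : M3)

/-- Row-wise gradient of a vector field: `(grad v)_{ij} = ∂_j v_i`. -/
def gradMat (v : V3 → V3) (x : V3) : M3 :=
  Matrix.of fun i j => pd j (fun y => v y i) x

/-- Symmetric gradient `def v`. -/
def defSym (v : V3 → V3) (x : V3) : M3 := symPart (gradMat v x)

/-- Incompatibility operator `inc U = curl S⁻¹ curl U`. -/
def incMat (U : V3 → M3) (x : V3) : M3 :=
  curlMat (fun y => Sinv (curlMat U y)) x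

/-- Linearized Cotton–York operator `cinc U = curl S⁻¹ curl S⁻¹ curl U`. -/
def cincMat (U : V3 → M3) (x : V3) : M3 :=
  curlMat (fun y => Sinv (incMat U y)) x

/-- `divdiv U = Σ_{ij} ∂_i ∂_j U_{ij}`. -/
def divdiv (U : V3 → M3) (x : V3) : ℝ :=
  ∑ i, ∑ j, pd i (fun y => pd j (fun z => U z i j) y) x

/-- Conformal Killing field `(x·x)a - 2(a·x)x + b×x + cx + d`. -/
def CKfield (a b d : V3) (c : ℝ) : V3 → V3 :=
  fun x => (x ⬝ᵥ x) • a - (2 * (a ⬝ᵥ x)) • x + crossProduct b x + c • x + d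

/-- Entry `(def u)_{ij}` of the symmetric gradient. -/
def defEntry (u : V3 → V3) (i j : Fin 3) (x : V3) : ℝ :=
  (pd j (fun y => u y i) x + pd i (fun y => u y j) x) / 2

/-- Entry `(dev def u)_{ij}`. -/
def devDefEntry (u : V3 → V3) (i j : Fin 3) (x : V3) : ℝ :=
  defEntry u i j x - (if i = j then (3:ℝ)⁻¹ * ∑ k, pd k (fun y => u y k) x else 0)

/-- Iterated partial derivative along a list of directions. -/
def pds : List (Fin 3) → (V3 → ℝ) → V3 → ℝ
  | [], f => f
  | i :: l, f => pd i (pds l f)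

/-- Orthogonal projection of `v` onto the plane with unit normal `n`. -/
def projV (n v : V3) : V3 := v - (n ⬝ᵥ v) • n

/-- Row-wise cross product `U × n`. -/
def rowCross (U : M3) (n : V3) : M3 := Matrix.of fun i => crossProduct (U i) n

/-- Row-wise projection `U Π`. -/
def rowProj (U : M3) (n : V3) : M3 := Matrix.of fun i => projV n (U i)

/-- Frobenius inner product. -/
def frob (A B : M3) : ℝ := ∑ i, ∑ j, A i j * B i j

/-- Projection matrix `Π = I - n nᵀ`. -/
def Pmat (n : V3) : M3 := 1 - vecMulVec n n

/-- `sym curl σ`. -/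
def symCurl (σ : V3 → M3) (x : V3) : M3 := symPart (curlMat σ x)

/-- Tangential partial derivative `(Π∇)_i f`. -/
def pdF (n : V3) (i : Fin 3) (f : V3 → ℝ) (x : V3) : ℝ :=
  pd i f x - n i * ∑ k, n k * pd k f x

/-- Row-wise surface gradient of a vector field. -/
def gradFMat (n : V3) (u : V3 → V3) (x : V3) : M3 :=
  Matrix.of fun i j => pdF n j (fun y => u y i) x

/-- Surface symmetric gradient `def_F u`. -/
def defF (n : V3) (u : V3 → V3) (x : V3) : M3 := symPart (gradFMat n u x)

/-- Normal derivative of a matrix field, entrywise. -/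
def dnMat (n : V3) (τ : V3 → M3) (x : V3) : M3 :=
  Matrix.of fun i j => fderiv ℝ (fun y => τ y i j) x n

/-- `tr₁ σ = sym(Π σ × n)`. -/
def tr1 (n : V3) (σ : V3 → M3) (x : V3) : M3 :=
  symPart (rowCross (Pmat n * σ x) n)

/-- `tr₃ σ = 2 def_F(n·(sym curl σ)Π) - Π ∂ₙ(sym curl σ) Π`. -/
def tr3 (n : V3) (σ : V3 → M3) (x : V3) : M3 :=
  (2:ℝ) • defF n (fun y => projV n (Matrix.vecMul n (symCurl σ y))) x -
    Pmat n * dnMat n (symCurl σ) x * Pmat n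

/-- `div_F div_F U`. -/
def divFdivF (n : V3) (U : V3 → M3) (x : V3) : ℝ :=
  ∑ i, ∑ j, pdF n i (fun y => pdF n j (fun z => U z i j) y) x

lemma pdF_eq (n : V3) (i : Fin 3) (f : V3 → ℝ) (x : V3) :
    pdF n i f x = ∑ a, Pmat n i a * pd a f x := by
  fin_cases i <;> simp [pdF, Pmat, Fin.sum_univ_three, vecMulVec_apply, Matrix.one_apply] <;> ring

lemma pd_lin {ι : Type} [Fintype ι] (a : Fin 3) (c : ι → ℝ) (f : ι → V3 → ℝ)
    (hf : ∀ i, Differentiable ℝ (f i)) (x : V3) :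
    pd a (fun y => ∑ i, c i * f i y) x = ∑ i, c i * pd a (f i) x := by
  have h : HasFDerivAt (fun y => ∑ i, c i * f i y) (∑ i, c i • fderiv ℝ (f i) x) x := by
    apply HasFDerivAt.fun_sum
    intro i _
    exact (hf i x).hasFDerivAt.const_mul (c i)
  simp [pd, h.fderiv]

lemma pd_diff (a : Fin 3) (f : V3 → ℝ) (hf : ContDiff ℝ 2 f) :
    Differentiable ℝ (pd a f) := by
  unfold pd
  have : ContDiff ℝ 1 (fderiv ℝ f) := hf.fderiv_right (by norm_num)
  exact (this.clm_apply contDiff_const).differentiable (by norm_num)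

lemma pd_comm (a b : Fin 3) (f : V3 → ℝ) (hf : ContDiff ℝ 2 f) (x : V3) :
    pd a (pd b f) x = pd b (pd a f) x := by
  have hd : DifferentiableAt ℝ (fderiv ℝ f) x :=
    ((hf.fderiv_right (m := 1) (by norm_num)).differentiable (by norm_num)) x
  have key : ∀ u v : V3, fderiv ℝ (fun y => fderiv ℝ f y u) x v = fderiv ℝ (fderiv ℝ f) x v u := by
    intro u v
    rw [fderiv_clm_apply hd (differentiableAt_const u)]
    simp
  have hs : IsSymmSndFDerivAt ℝ f x := hf.contDiffAt.isSymmSndFDerivAt (by simp)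
  unfold pd
  rw [key, key]
  exact hs _ _

lemma fderiv_eq_pd (f : V3 → ℝ) (x n : V3) : fderiv ℝ f x n = ∑ k, n k * pd k f x := by
  have : n = ∑ k, n k • (Pi.single k 1 : V3) := by
    ext j; fin_cases j <;> simp [Fin.sum_univ_three]
  conv_lhs => rw [this]
  simp [pd]

lemma Pmat_contract (n : V3) (hn : n ⬝ᵥ n = 1) (a b : Fin 3) :
    ∑ i, Pmat n i a * Pmat n i b = Pmat n a b := by
  have h : n 0 * n 0 + n 1 * n 1 + n 2 * n 2 = 1 := by
    simpa [dotProduct, Fin.sum_univ_three] using hn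
  simp only [Fin.sum_univ_three, Pmat, Matrix.sub_apply, vecMulVec_apply]
  fin_cases a <;> fin_cases b <;> simp [Matrix.one_apply] <;> grind

lemma mskw_contract (n : V3) (l b : Fin 3) :
    ∑ j, Pmat n j b * mskw n l j = mskw n l b := by
  simp only [Fin.sum_univ_three, Pmat, Matrix.sub_apply, vecMulVec_apply]
  fin_cases l <;> fin_cases b <;> simp [Matrix.one_apply, mskw] <;> ring

lemma tr1_eq (n : V3) (σ : V3 → M3) (z : V3) (i j : Fin 3) :
    tr1 n σ z i j = ∑ p : Fin 3 × Fin 3,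
      ((2:ℝ)⁻¹ * (Pmat n i p.1 * mskw n p.2 j + Pmat n j p.1 * mskw n p.2 i)) * σ z p.1 p.2 := by
  simp only [Fintype.sum_prod_type, Fin.sum_univ_three]
  have hr : ∀ i j, rowCross (Pmat n * σ z) n i j
      = ∑ l, (∑ k, Pmat n i k * σ z k l) * mskw n l j := by
    intro i j
    fin_cases j <;>
      simp [rowCross, crossProduct, Matrix.mul_apply, mskw, Fin.sum_univ_three] <;> ring
  simp only [tr1, symPart, Matrix.smul_apply, Matrix.add_apply, Matrix.transpose_apply, hr,
    Fin.sum_univ_three, smul_eq_mul]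
  ring

lemma divF_eq (n : V3) (hn : n ⬝ᵥ n = 1)
    (σ : V3 → M3) (hσ : ∀ i j, ContDiff ℝ 2 fun x => σ x i j) (x : V3) :
    divFdivF n (tr1 n σ) x = ∑ a, ∑ b, ∑ k, ∑ l,
      Pmat n a k * mskw n l b * pd a (pd b (fun y => σ y k l)) x := by
  have h1 : ∀ i j, pdF n i (fun y => pdF n j (fun z => tr1 n σ z i j) y) x =
      ∑ a, ∑ b, ∑ k, ∑ l, Pmat n i a * (Pmat n j b *
        (((2:ℝ)⁻¹ * (Pmat n i k * mskw n l j + Pmat n j k * mskw n l i)) *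
          pd a (pd b (fun y => σ y k l)) x)) := by
    intro i j
    have e1 : ∀ b y, pd b (fun z => tr1 n σ z i j) y = ∑ p : Fin 3 × Fin 3,
      ((2:ℝ)⁻¹ * (Pmat n i p.1 * mskw n p.2 j + Pmat n j p.1 * mskw n p.2 i)) *
        pd b (fun z => σ z p.1 p.2) y := by
      intro b y
      simp only [tr1_eq]
      exact pd_lin b _ (fun (p : Fin 3 × Fin 3) z => σ z p.1 p.2)
        (fun p => (hσ _ _).differentiable (by norm_num)) y
    have hd : ∀ b, Differentiable ℝ (pd b (fun z => tr1 n σ z i j)) := by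
      intro b
      have : pd b (fun z => tr1 n σ z i j) = fun y => ∑ p : Fin 3 × Fin 3,
        ((2:ℝ)⁻¹ * (Pmat n i p.1 * mskw n p.2 j + Pmat n j p.1 * mskw n p.2 i)) *
        pd b (fun z => σ z p.1 p.2) y := funext (e1 b)
      rw [this]
      apply Differentiable.fun_sum
      intro p _
      exact (pd_diff b _ (hσ p.1 p.2)).const_mul _
    rw [pdF_eq]
    refine Finset.sum_congr rfl fun a _ => ?_
    simp only [pdF_eq n j]
    rw [pd_lin a _ _ hd, Finset.mul_sum]
    refine Finset.sum_congr rfl fun b _ => ?_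
    have e2 : pd b (fun z => tr1 n σ z i j) = _ := funext (e1 b)
    rw [e2, pd_lin a _ (fun (p : Fin 3 × Fin 3) => pd b (fun z => σ z p.1 p.2))
      (fun p => pd_diff b _ (hσ p.1 p.2))]
    simp only [Fintype.sum_prod_type, Finset.mul_sum]
  have h2 : ∀ a b k l, ∑ i, ∑ j, Pmat n i a * (Pmat n j b *
        (((2:ℝ)⁻¹ * (Pmat n i k * mskw n l j + Pmat n j k * mskw n l i)) *
          pd a (pd b (fun y => σ y k l)) x)) =
      (2:ℝ)⁻¹ * (Pmat n a k * mskw n l b * pd a (pd b (fun y => σ y k l)) x)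
      + (2:ℝ)⁻¹ * (Pmat n b k * mskw n l a * pd b (pd a (fun y => σ y k l)) x) := by
    intro a b k l
    rw [pd_comm b a _ (hσ k l), ← Pmat_contract n hn a k, ← Pmat_contract n hn b k,
      ← mskw_contract n l a, ← mskw_contract n l b]
    simp only [Fin.sum_univ_three]
    ring
  have h3 : divFdivF n (tr1 n σ) x = ∑ a, ∑ b, ∑ k, ∑ l,
      ∑ i, ∑ j, Pmat n i a * (Pmat n j b *
        (((2:ℝ)⁻¹ * (Pmat n i k * mskw n l j + Pmat n j k * mskw n l i)) *
          pd a (pd b (fun y => σ y k l)) x)) := by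
    simp only [divFdivF, h1]
    have sw : ∀ f : Fin 3 → Fin 3 → Fin 3 → Fin 3 → Fin 3 → Fin 3 → ℝ,
        ∑ i, ∑ j, ∑ a, ∑ b, ∑ k, ∑ l, f i j a b k l =
        ∑ a, ∑ b, ∑ k, ∑ l, ∑ i, ∑ j, f i j a b k l := by
      intro f
      have s2 : ∀ g : Fin 3 → Fin 3 → Fin 3 → ℝ, ∑ i, ∑ j, ∑ a, g i j a =
          ∑ a, ∑ i, ∑ j, g i j a := by
        intro g
        simp only [Fin.sum_univ_three]; ring
      rw [s2]; refine Finset.sum_congr rfl fun a _ => ?_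
      rw [s2]; refine Finset.sum_congr rfl fun b _ => ?_
      rw [s2]; refine Finset.sum_congr rfl fun k _ => ?_
      rw [s2]
    exact sw _
  rw [h3]
  simp only [h2]
  simp only [Finset.sum_add_distrib, ← Finset.mul_sum]
  rw [Finset.sum_comm (f := fun a b => ∑ k, ∑ l,
    Pmat n b k * mskw n l a * pd b (pd a (fun y => σ y k l)) x)]
  ring

lemma trace_eq (n : V3) (hn : n ⬝ᵥ n = 1)
    (σ : V3 → M3) (hS : ∀ i j, Differentiable ℝ fun x => symCurl σ x i j) (x : V3) :
    (tr3 n σ x).trace =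
      2 * (∑ a, ∑ j, ∑ m, Pmat n a j * n m * pd a (fun y => symCurl σ y m j) x)
      - ∑ i, ∑ j, ∑ k, Pmat n i j * n k * pd k (fun y => symCurl σ y i j) x := by
  have h1 : ∀ i y, projV n (Matrix.vecMul n (symCurl σ y)) i =
      ∑ p : Fin 3 × Fin 3, (Pmat n i p.1 * n p.2) * symCurl σ y p.2 p.1 := by
    intro i y
    fin_cases i <;> simp [projV, Fintype.sum_prod_type, Fin.sum_univ_three, Pmat, vecMulVec_apply,
      Matrix.one_apply, Matrix.vecMul, dotProduct] <;> ring
  have h2 : ∀ i a, pd a (fun y => projV n (Matrix.vecMul n (symCurl σ y)) i) x =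
      ∑ p : Fin 3 × Fin 3, (Pmat n i p.1 * n p.2) * pd a (fun y => symCurl σ y p.2 p.1) x := by
    intro i a
    simp only [h1]
    exact pd_lin a _ (fun (p : Fin 3 × Fin 3) y => symCurl σ y p.2 p.1) (fun p => hS _ _) x
  have h3 : (defF n (fun y => projV n (Matrix.vecMul n (symCurl σ y))) x).trace =
      ∑ a, ∑ j, ∑ m, (∑ i, Pmat n i a * Pmat n i j) * n m *
        pd a (fun y => symCurl σ y m j) x := by
    simp only [Matrix.trace, Matrix.diag, defF, symPart, gradFMat, Matrix.smul_apply,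
      Matrix.add_apply, Matrix.transpose_apply, Matrix.of_apply, pdF_eq, h2, smul_eq_mul,
      Fintype.sum_prod_type, Fin.sum_univ_three]
    ring
  have h4 : (Pmat n * dnMat n (symCurl σ) x * Pmat n).trace =
      ∑ i, ∑ j, ∑ k, (∑ p, Pmat n p i * Pmat n p j) * n k *
        pd k (fun y => symCurl σ y i j) x := by
    have hP : ∀ i j, Pmat n i j = Pmat n j i := by
      intro i j
      simp [Pmat, vecMulVec_apply, Matrix.one_apply, eq_comm, mul_comm]
    rw [Matrix.trace_mul_comm, ← Matrix.mul_assoc]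
    simp only [Matrix.trace, Matrix.diag, Matrix.mul_apply, dnMat, Matrix.of_apply, fderiv_eq_pd,
      Fin.sum_univ_three]
    rw [hP 1 0, hP 2 0, hP 2 1]
    ring
  simp only [Pmat_contract n hn] at h3 h4
  rw [tr3, Matrix.trace_sub, Matrix.trace_smul, h3, h4, smul_eq_mul]

lemma symCurl_pd (σ : V3 → M3) (hσ : ∀ i j, ContDiff ℝ 2 fun x => σ x i j) :
    (∀ i j, Differentiable ℝ fun x => symCurl σ x i j) ∧
    (∀ c i j x, pd c (fun y => symCurl σ y i j) x =
      (2:ℝ)⁻¹ * ((pd c (pd (j+1) (fun y => σ y i (j+2))) x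
        - pd c (pd (j+2) (fun y => σ y i (j+1))) x)
      + (pd c (pd (i+1) (fun y => σ y j (i+2))) x
        - pd c (pd (i+2) (fun y => σ y j (i+1))) x))) := by
  have hc : ∀ y i j, curlMat σ y i j = pd (j+1) (fun y => σ y i (j+2)) y
      - pd (j+2) (fun y => σ y i (j+1)) y := by
    intro y i j
    fin_cases j <;> rfl
  have hd : ∀ b k l, Differentiable ℝ (pd b (fun y => σ y k l)) :=
    fun b k l => pd_diff b _ (hσ k l)
  have hs : ∀ i j, (fun y => symCurl σ y i j) = fun y =>
      (2:ℝ)⁻¹ * ((pd (j+1) (fun y => σ y i (j+2)) y - pd (j+2) (fun y => σ y i (j+1)) y)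
      + (pd (i+1) (fun y => σ y j (i+2)) y - pd (i+2) (fun y => σ y j (i+1)) y)) := by
    intro i j
    funext y
    simp [symCurl, symPart, hc]
  constructor
  · intro i j
    rw [hs]
    exact (((hd _ _ _).sub (hd _ _ _)).add ((hd _ _ _).sub (hd _ _ _))).const_mul _
  · intro c i j x
    rw [hs]
    have := ((((hd (j+1) i (j+2) x).hasFDerivAt).sub ((hd (j+2) i (j+1) x).hasFDerivAt)).add
      (((hd (i+1) j (i+2) x).hasFDerivAt).sub ((hd (i+2) j (i+1) x).hasFDerivAt))).const_mul
      ((2:ℝ)⁻¹)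
    rw [pd]
    erw [this.fderiv]
    simp [pd]
    ring

/-- `tr(tr₃ σ) = div_F div_F (tr₁ σ)` for smooth symmetric
traceless matrix fields `σ`. -/
theorem trace_tr3_eq_divFdivF_tr1 (n : V3) (hn : n ⬝ᵥ n = 1)
    (σ : V3 → M3) (hσ : ∀ i j, ContDiff ℝ (⊤ : ℕ∞) fun x => σ x i j)
    (hsym : ∀ x, (σ x)ᵀ = σ x) (htr : ∀ x, (σ x).trace = 0) (x : V3) :
    (tr3 n σ x).trace = divFdivF n (tr1 n σ) x := by
  have hσ2 : ∀ i j, ContDiff ℝ 2 fun x => σ x i j :=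
    fun i j => (hσ i j).of_le (by exact WithTop.coe_le_coe.2 (le_top (a := (2 : ℕ∞))))
  obtain ⟨hS, hp⟩ := symCurl_pd σ hσ2
  rw [divF_eq n hn σ hσ2, trace_eq n hn σ hS]
  simp only [hp]
  have hsy : ∀ i j, (fun y => σ y i j) = fun y => σ y j i := by
    intro i j
    funext y
    exact congrFun (congrFun (hsym y) j) i
  have hcm : ∀ a b k l, pd a (pd b (fun y => σ y k l)) x = pd b (pd a (fun y => σ y k l)) x :=
    fun a b k l => pd_comm a b _ (hσ2 k l) x
  have h : n 0 * n 0 + n 1 * n 1 + n 2 * n 2 = 1 := by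
    simpa [dotProduct, Fin.sum_univ_three] using hn
  have f1 : (1 : Fin 3) + 1 = 2 := rfl
  have f2 : (1 : Fin 3) + 2 = 0 := rfl
  have f3 : (2 : Fin 3) + 1 = 0 := rfl
  have f4 : (2 : Fin 3) + 2 = 1 := rfl
  simp only [Fin.sum_univ_three, zero_add, f1, f2, f3, f4]
  rw [hsy 1 0, hsy 2 0, hsy 2 1]
  simp only [hcm 1 0, hcm 2 0, hcm 2 1]
  generalize hE : (fun a b k l => pd a (pd b (fun y => σ y k l)) x) = E
  have hE' : ∀ a b k l, pd a (pd b (fun y => σ y k l)) x = E a b k l := by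
    intro a b k l
    rw [← hE]
  simp only [hE']
  simp [Pmat, mskw, vecMulVec_apply, Matrix.one_apply]
  ring
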